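/- (Frappier–Rahman–Ruscheweyh) Let P be a complex polynomial of degree n > 1 and let R ≥ 1. Then max_{|z|=R}|P(z)| ≤ R^n·max_{|z|=1}|P(z)| − (R^n − R^{n−2})·|P(0)|. -/

import Mathlib

open Polynomial Metric

/-- The maximum of `|P(z)|` over the circle `|z| = r`. -/
noncomputable def maxMod (P : Polynomial ℂ) (r : ℝ) : ℝ :=
  ⨆ z : sphere (0 : ℂ) r, ‖(P.eval z : ℂ)‖

/-!
Reversing the coefficients and putting `a = 1 / z` turns the inequality into
`‖Q a‖ + (1 - ‖a‖²) ‖q‖ ≤ max_{‖z‖ = 1} ‖Q z‖` for `‖a‖ ≤ 1`, where `q` is the coefficient of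
`z ^ n` in the polynomial `Q` of degree at most `n`. For `‖a‖ < 1`, consider the Blaschke product
`B z = z ^ (n - 1) (z - a) / (1 - conj(a) z)`. For each unimodular `w` the equation `B z = w` has
`n` distinct solutions, all on the unit circle, and Lagrange interpolation at these solutions writes
`Q a + w (1 - ‖a‖²) q` as a convex combination of the values of `Q` there. Choosing `w` so that the
two summands have the same argument gives the claim.
-/

open scoped ComplexConjugate

theorem norm_eval_le_maxMod (P : ℂ[X]) (z : ℂ) : ‖P.eval z‖ ≤ maxMod P ‖z‖ := by
  have hbdd : BddAbove (Set.range fun u : sphere (0 : ℂ) ‖z‖ ↦ ‖P.eval (u : ℂ)‖) :=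
    (isCompact_range (by fun_prop)).bddAbove
  exact le_ciSup hbdd ⟨z, mem_sphere_zero_iff_norm.2 rfl⟩

theorem maxMod_le {P : ℂ[X]} {r M : ℝ} (hr : 0 ≤ r) (h : ∀ z : ℂ, ‖z‖ = r → ‖P.eval z‖ ≤ M) :
    maxMod P r ≤ M := by
  have : Nonempty (sphere (0 : ℂ) r) := (NormedSpace.sphere_nonempty.2 hr).to_subtype
  exact ciSup_le fun z ↦ h z (mem_sphere_zero_iff_norm.1 z.2)

section Interpolation

theorem nodup_roots_of_eval_derivative_ne_zero {R : Type*} [CommRing R] [IsDomain R] {p : R[X]}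
    (h : ∀ z ∈ p.roots, (derivative p).eval z ≠ 0) : p.roots.Nodup := by
  classical
  refine Multiset.nodup_iff_count_le_one.2 fun z ↦ not_lt.1 fun hz ↦ ?_
  have hmem : z ∈ p.roots := Multiset.count_pos.1 (zero_lt_one.trans hz)
  rw [count_roots, one_lt_rootMultiplicity_iff_isRoot (ne_zero_of_mem_roots hmem)] at hz
  exact h z hmem hz.2

theorem nodal_roots_toFinset {R : Type*} [CommRing R] [IsDomain R] [DecidableEq R] {p : R[X]}
    (hmonic : p.Monic) (hsplits : p.Splits) (hnodup : p.roots.Nodup) :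
    Lagrange.nodal p.roots.toFinset id = p := by
  rw [Lagrange.nodal_eq, Finset.prod, Multiset.toFinset_val, hnodup.dedup]
  exact (hsplits.eq_prod_roots_of_monic hmonic).symm

variable {F : Type*} [Field F]

theorem eval_eq_sum_eval_nodal_div {s : Finset F} {f : F[X]} {x : F} (hf : f.degree < s.card)
    (hx : x ∉ s) :
    f.eval x = ∑ z ∈ s, (Lagrange.nodal s id).eval x /
      ((x - z) * (derivative (Lagrange.nodal s id)).eval z) * f.eval z := by
  classical
  have hne : ∀ z ∈ s, x ≠ id z := fun z hz ↦ (ne_of_mem_of_not_mem hz hx).symm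
  conv_lhs => rw [Lagrange.eq_interpolate (v := id) Function.injective_id.injOn hf]
  rw [Lagrange.eval_interpolate_not_at_node _ hne, Finset.mul_sum]
  refine Finset.sum_congr rfl fun z hz ↦ ?_
  rw [Lagrange.nodalWeight_eq_eval_derivative_nodal hz, div_eq_mul_inv, mul_inv]
  simp only [id]
  ring

theorem degree_sub_C_coeff_mul_lt {R : Type*} [Ring R] {p Q : R[X]} (hp : p.Monic)
    (hQ : Q.natDegree ≤ p.natDegree) :
    (Q - C (Q.coeff p.natDegree) * p).degree < p.natDegree := by
  rw [degree_lt_iff_coeff_zero]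
  intro i hi
  rcases hi.eq_or_lt with rfl | hi
  · simp [hp.coeff_natDegree]
  · simp [coeff_eq_zero_of_natDegree_lt hi, coeff_eq_zero_of_natDegree_lt (hQ.trans_lt hi)]

theorem eval_sub_coeff_mul_eval_eq_sum_roots [DecidableEq F] {p Q : F[X]} {x : F} (hp : p.Monic)
    (hsplits : p.Splits) (hnodup : p.roots.Nodup) (hQ : Q.natDegree ≤ p.natDegree)
    (hx : x ∉ p.roots) :
    Q.eval x - Q.coeff p.natDegree * p.eval x = ∑ z ∈ p.roots.toFinset,
      p.eval x / ((x - z) * (derivative p).eval z) * Q.eval z := by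
  have hcard : p.roots.toFinset.card = p.natDegree := by
    rw [Multiset.toFinset_card_of_nodup hnodup, hsplits.natDegree_eq_card_roots]
  have hinterp := eval_eq_sum_eval_nodal_div ((degree_sub_C_coeff_mul_lt hp hQ).trans_eq
    (congrArg _ hcard.symm))
    (mt Multiset.mem_toFinset.1 hx)
  rw [nodal_roots_toFinset hp hsplits hnodup, eval_sub, eval_mul, eval_C] at hinterp
  rw [hinterp]
  refine Finset.sum_congr rfl fun z hz ↦ ?_
  have hpz : p.eval z = 0 := isRoot_of_mem_roots (Multiset.mem_toFinset.1 hz)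
  rw [eval_sub, eval_mul, hpz, mul_zero, sub_zero]

end Interpolation

section Blaschke

/-- The polynomial whose zeros are the solutions of `B z = w`, where `B` is the Blaschke product
`B z = z ^ k (z - a) / (1 - conj(a) z)`, with the denominator cleared. -/
noncomputable def blaschkeLevel (k : ℕ) (a w : ℂ) : ℂ[X] :=
  X ^ k * (X - C a) - C w * (1 - C (conj a) * X)

/-- The weight at the node `z` of the quadrature rule for evaluation at `a` whose nodes are the
zeros of `blaschkeLevel k a w`. With the Poisson kernel `p = (1 - ‖a‖²) / ‖z - a‖²` it is
`p / (k + p)`. -/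
noncomputable def blaschkeWeight (k : ℕ) (a z : ℂ) : ℝ :=
  (1 - ‖a‖ ^ 2) / (k * ‖z - a‖ ^ 2 + (1 - ‖a‖ ^ 2))

variable {k : ℕ} {a w z : ℂ}

theorem isRoot_blaschkeLevel :
    (blaschkeLevel k a w).IsRoot z ↔ z ^ k * (z - a) = w * (1 - conj a * z) := by
  simp [blaschkeLevel, sub_eq_zero]

theorem eval_blaschkeLevel_self : (blaschkeLevel k a w).eval a = -(w * (1 - ‖a‖ ^ 2)) := by
  simp [blaschkeLevel, Complex.conj_mul']

theorem degree_blaschkeLevel_subtrahend_lt (hk : k ≠ 0) :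
    (C w * (1 - C (conj a) * X)).degree < (X ^ k * (X - C a)).degree := by
  have hdeg : (X ^ k * (X - C a)).degree = ((k + 1 : ℕ) : WithBot ℕ) := by
    rw [degree_mul, degree_X_pow, degree_X_sub_C, Nat.cast_succ]
  have hle : (C w * (1 - C (conj a) * X)).degree ≤ 1 := by compute_degree
  rw [hdeg]
  exact hle.trans_lt (by exact_mod_cast Nat.succ_lt_succ (Nat.pos_of_ne_zero hk))

theorem monic_blaschkeLevel (hk : k ≠ 0) : (blaschkeLevel k a w).Monic :=
  ((monic_X_pow k).mul (monic_X_sub_C a)).sub_of_left (degree_blaschkeLevel_subtrahend_lt hk)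

theorem natDegree_blaschkeLevel (hk : k ≠ 0) : (blaschkeLevel k a w).natDegree = k + 1 := by
  rw [blaschkeLevel, natDegree_eq_of_degree_eq
    (degree_sub_eq_left_of_degree_lt (degree_blaschkeLevel_subtrahend_lt hk)),
    (monic_X_pow k).natDegree_mul (monic_X_sub_C a), natDegree_X_pow, natDegree_X_sub_C]

theorem sq_norm_one_sub_conj_mul (a z : ℂ) :
    ‖1 - conj a * z‖ ^ 2 = ‖z - a‖ ^ 2 + (1 - ‖a‖ ^ 2) * (1 - ‖z‖ ^ 2) := by
  simp only [Complex.sq_norm, Complex.normSq_apply, Complex.sub_re, Complex.sub_im, Complex.mul_re,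
    Complex.mul_im, Complex.one_re, Complex.one_im, Complex.conj_re, Complex.conj_im]
  ring

theorem one_sub_sq_norm_pos (ha : ‖a‖ < 1) : 0 < 1 - ‖a‖ ^ 2 :=
  sub_pos.2 (pow_lt_one₀ (norm_nonneg a) ha two_ne_zero)

theorem norm_eq_one_of_isRoot_blaschkeLevel (ha : ‖a‖ < 1) (hw : ‖w‖ = 1)
    (hz : (blaschkeLevel k a w).IsRoot z) : ‖z‖ = 1 := by
  have hnorm : ‖z‖ ^ k * ‖z - a‖ = ‖1 - conj a * z‖ := by
    simpa [hw] using congrArg norm (isRoot_blaschkeLevel.1 hz)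
  have hbalance : ((‖z‖ ^ k) ^ 2 - 1) * ‖z - a‖ ^ 2 = (1 - ‖a‖ ^ 2) * (1 - ‖z‖ ^ 2) := by
    rw [sub_mul, ← mul_pow, hnorm, sq_norm_one_sub_conj_mul]
    ring
  have ha' := one_sub_sq_norm_pos ha
  rcases lt_trichotomy ‖z‖ 1 with hlt | heq | hgt
  · have hpow : (‖z‖ ^ k) ^ 2 ≤ 1 :=
      pow_le_one₀ (by positivity) (pow_le_one₀ (norm_nonneg z) hlt.le)
    have hleft := mul_nonneg (sub_nonneg.2 hpow) (sq_nonneg ‖z - a‖)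
    have hright := mul_pos ha' (one_sub_sq_norm_pos hlt)
    linarith
  · exact heq
  · have hpow : 1 ≤ (‖z‖ ^ k) ^ 2 := one_le_pow₀ (one_le_pow₀ hgt.le)
    have hleft := mul_nonneg (sub_nonneg.2 hpow) (sq_nonneg ‖z - a‖)
    have hright := mul_pos ha' (sub_pos.2 (one_lt_pow₀ hgt two_ne_zero))
    linarith

theorem sub_mul_eval_derivative_blaschkeLevel (hz : ‖z‖ = 1)
    (hroot : (blaschkeLevel k a w).IsRoot z) :
    (z - a) * (derivative (blaschkeLevel k a w)).eval z =
      w * (k * ‖z - a‖ ^ 2 + (1 - ‖a‖ ^ 2)) := by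
  have hzz : conj z * z = 1 := by simp [Complex.conj_mul', hz]
  have hpow : k * z ^ (k - 1) = k * (conj z * z ^ k) := by
    cases k with
    | zero => simp
    | succ m => rw [Nat.add_sub_cancel, pow_succ', ← mul_assoc (conj z), hzz, one_mul]
  have hderiv : (derivative (blaschkeLevel k a w)).eval z =
      k * (conj z * z ^ k) * (z - a) + z ^ k + w * conj a := by
    simp [blaschkeLevel, derivative_X_pow, hpow]
  rw [hderiv, ← Complex.conj_mul', ← Complex.conj_mul' a, map_sub]
  linear_combination (k * conj z * (z - a) + 1) * isRoot_blaschkeLevel.1 hroot -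
    w * k * conj a * (z - a) * hzz

theorem blaschkeWeight_denom_pos (ha : ‖a‖ < 1) : 0 < k * ‖z - a‖ ^ 2 + (1 - ‖a‖ ^ 2) :=
  add_pos_of_nonneg_of_pos (by positivity) (one_sub_sq_norm_pos ha)

theorem blaschkeWeight_nonneg (ha : ‖a‖ < 1) : 0 ≤ blaschkeWeight k a z :=
  div_nonneg (one_sub_sq_norm_pos ha).le (blaschkeWeight_denom_pos ha).le

theorem eval_derivative_blaschkeLevel_ne_zero (ha : ‖a‖ < 1) (hw : ‖w‖ = 1)
    (hroot : (blaschkeLevel k a w).IsRoot z) :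
    (derivative (blaschkeLevel k a w)).eval z ≠ 0 := by
  have hderiv := sub_mul_eval_derivative_blaschkeLevel
    (norm_eq_one_of_isRoot_blaschkeLevel ha hw hroot) hroot
  have hw0 : w ≠ 0 := norm_ne_zero_iff.1 (hw ▸ one_ne_zero)
  refine right_ne_zero_of_mul (hderiv ▸ mul_ne_zero hw0 ?_)
  exact_mod_cast (blaschkeWeight_denom_pos ha).ne'

theorem eval_blaschkeLevel_self_div (ha : ‖a‖ < 1) (hw : ‖w‖ = 1)
    (hroot : (blaschkeLevel k a w).IsRoot z) :
    (blaschkeLevel k a w).eval a / ((a - z) * (derivative (blaschkeLevel k a w)).eval z) =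
      blaschkeWeight k a z := by
  have hw0 : w ≠ 0 := norm_ne_zero_iff.1 (hw ▸ one_ne_zero)
  rw [← neg_sub z a, neg_mul, eval_blaschkeLevel_self, neg_div_neg_eq,
    sub_mul_eval_derivative_blaschkeLevel (norm_eq_one_of_isRoot_blaschkeLevel ha hw hroot) hroot,
    mul_div_mul_left _ _ hw0, blaschkeWeight]
  push_cast
  rfl

theorem sum_blaschkeWeight_smul_eval (hk : k ≠ 0) (ha : ‖a‖ < 1) (hw : ‖w‖ = 1) {Q : ℂ[X]}
    (hQ : Q.natDegree ≤ k + 1) :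
    ∑ z ∈ (blaschkeLevel k a w).roots.toFinset, blaschkeWeight k a z • Q.eval z =
      Q.eval a + w * ((1 - ‖a‖ ^ 2) * Q.coeff (k + 1)) := by
  set p := blaschkeLevel k a w
  have hnodup : p.roots.Nodup := nodup_roots_of_eval_derivative_ne_zero fun z hz ↦
    eval_derivative_blaschkeLevel_ne_zero ha hw (isRoot_of_mem_roots hz)
  have ha_notMem : a ∉ p.roots := fun h ↦
    ha.ne (norm_eq_one_of_isRoot_blaschkeLevel ha hw (isRoot_of_mem_roots h))
  have hdeg : p.natDegree = k + 1 := natDegree_blaschkeLevel hk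
  calc ∑ z ∈ p.roots.toFinset, blaschkeWeight k a z • Q.eval z
      = ∑ z ∈ p.roots.toFinset, p.eval a / ((a - z) * (derivative p).eval z) * Q.eval z :=
        Finset.sum_congr rfl fun z hz ↦ by
          rw [eval_blaschkeLevel_self_div ha hw (isRoot_of_mem_roots (Multiset.mem_toFinset.1 hz)),
            Complex.real_smul]
    _ = Q.eval a - Q.coeff p.natDegree * p.eval a :=
        (eval_sub_coeff_mul_eval_eq_sum_roots (monic_blaschkeLevel hk) (IsAlgClosed.splits p)
          hnodup (hdeg ▸ hQ) ha_notMem).symm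
    _ = Q.eval a + w * ((1 - ‖a‖ ^ 2) * Q.coeff (k + 1)) := by
        rw [hdeg, eval_blaschkeLevel_self]
        ring

theorem sum_blaschkeWeight (hk : k ≠ 0) (ha : ‖a‖ < 1) (hw : ‖w‖ = 1) :
    ∑ z ∈ (blaschkeLevel k a w).roots.toFinset, blaschkeWeight k a z = 1 := by
  have h := sum_blaschkeWeight_smul_eval hk ha hw (Q := 1) (by simp)
  simp only [eval_one, coeff_one, Nat.succ_ne_zero, if_false, mul_zero, add_zero,
    Complex.real_smul, mul_one] at h
  exact_mod_cast h

end Blaschke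

theorem norm_eval_add_mul_coeff_le {k : ℕ} {a w : ℂ} (hk : k ≠ 0) (ha : ‖a‖ < 1) (hw : ‖w‖ = 1)
    {Q : ℂ[X]} (hQ : Q.natDegree ≤ k + 1) {M : ℝ} (hM : ∀ z : ℂ, ‖z‖ = 1 → ‖Q.eval z‖ ≤ M) :
    ‖Q.eval a + w * ((1 - ‖a‖ ^ 2) * Q.coeff (k + 1))‖ ≤ M := by
  rw [← sum_blaschkeWeight_smul_eval hk ha hw hQ, ← mem_closedBall_zero_iff]
  refine (convex_closedBall (0 : ℂ) M).sum_mem (fun z _ ↦ blaschkeWeight_nonneg ha)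
    (sum_blaschkeWeight hk ha hw) fun z hz ↦ mem_closedBall_zero_iff.2 (hM z ?_)
  exact norm_eq_one_of_isRoot_blaschkeLevel ha hw (isRoot_of_mem_roots (Multiset.mem_toFinset.1 hz))

theorem exists_norm_eq_one_norm_add_mul_eq {𝕜 : Type*} [RCLike 𝕜] (x y : 𝕜) :
    ∃ w : 𝕜, ‖w‖ = 1 ∧ ‖x + w * y‖ = ‖x‖ + ‖y‖ := by
  obtain ⟨c, hc, hcx⟩ := RCLike.exists_norm_mul_eq_self x
  obtain ⟨d, hd, hdy⟩ := RCLike.exists_norm_eq_mul_self y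
  refine ⟨c * d, by rw [norm_mul, hc, hd, one_mul], ?_⟩
  have hfactor : x + c * d * y = c * ((‖x‖ + ‖y‖ : ℝ) : 𝕜) := by
    rw [mul_assoc, ← hdy, RCLike.ofReal_add, mul_add, hcx]
  rw [hfactor, norm_mul, hc, one_mul, RCLike.norm_of_nonneg (by positivity)]

theorem norm_eval_add_mul_norm_coeff_le {n : ℕ} (hn : 1 < n) {Q : ℂ[X]} (hQ : Q.natDegree ≤ n)
    {a : ℂ} (ha : ‖a‖ ≤ 1) {M : ℝ} (hM : ∀ z : ℂ, ‖z‖ = 1 → ‖Q.eval z‖ ≤ M) :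
    ‖Q.eval a‖ + (1 - ‖a‖ ^ 2) * ‖Q.coeff n‖ ≤ M := by
  rcases ha.eq_or_lt with ha | ha
  · simpa [ha] using hM a ha
  obtain ⟨k, rfl⟩ := Nat.exists_eq_add_one_of_ne_zero (Nat.ne_zero_of_lt hn)
  obtain ⟨w, hw, halign⟩ := exists_norm_eq_one_norm_add_mul_eq (Q.eval a)
    (((1 - ‖a‖ ^ 2 : ℝ) : ℂ) * Q.coeff (k + 1))
  rw [norm_mul, Complex.norm_of_nonneg (one_sub_sq_norm_pos ha).le] at halign
  rw [← halign]
  push_cast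
  exact norm_eval_add_mul_coeff_le (by lia) ha hw hQ hM

theorem eval_inv_reflect_mul_pow {K : Type*} [Semifield K] {P : K[X]} {n : ℕ}
    (hP : P.natDegree ≤ n) {x : K} (hx : x ≠ 0) : (reflect n P).eval x⁻¹ * x ^ n = P.eval x := by
  let := invertibleOfNonzero hx
  simpa only [eval, invOf_eq_inv] using eval₂_reflect_mul_pow (RingHom.id K) x n P hP

theorem norm_eval_reflect {K : Type*} [NormedField K] {P : K[X]} {n : ℕ} (hP : P.natDegree ≤ n)
    {z : K} (hz : ‖z‖ = 1) : ‖(reflect n P).eval z‖ = ‖P.eval z⁻¹‖ := by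
  have hz0 : z ≠ 0 := norm_ne_zero_iff.1 (hz ▸ one_ne_zero)
  rw [← eval_inv_reflect_mul_pow hP (inv_ne_zero hz0), inv_inv, norm_mul, norm_pow, norm_inv, hz,
    inv_one, one_pow, mul_one]

theorem norm_eval_le_of_one_le_norm {n : ℕ} (hn : 1 < n) {P : ℂ[X]} (hP : P.natDegree ≤ n) {M : ℝ}
    (hM : ∀ u : ℂ, ‖u‖ = 1 → ‖P.eval u‖ ≤ M) {z : ℂ} (hz : 1 ≤ ‖z‖) :
    ‖P.eval z‖ ≤ ‖z‖ ^ n * M - (‖z‖ ^ n - ‖z‖ ^ (n - 2)) * ‖P.eval 0‖ := by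
  have hpos : 0 < ‖z‖ := zero_lt_one.trans_le hz
  have hbound : ‖(reflect n P).eval z⁻¹‖ + (1 - ‖z⁻¹‖ ^ 2) * ‖(reflect n P).coeff n‖ ≤ M :=
    norm_eval_add_mul_norm_coeff_le hn (natDegree_reflect_le.trans (max_le le_rfl hP))
      (norm_inv z ▸ inv_le_one_of_one_le₀ hz)
      fun u hu ↦ (norm_eval_reflect hP hu).trans_le (hM _ (by rw [norm_inv, hu, inv_one]))
  rw [coeff_reflect, revAt_le le_rfl, Nat.sub_self, coeff_zero_eq_eval_zero, norm_inv] at hbound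
  have hpow : ‖z‖ ^ (n - 2) = ‖z‖ ^ n * ‖z‖⁻¹ ^ 2 := by rw [inv_pow, pow_sub₀ _ hpos.ne' hn]
  calc ‖P.eval z‖ = ‖z‖ ^ n * ‖(reflect n P).eval z⁻¹‖ := by
        rw [← eval_inv_reflect_mul_pow hP (norm_pos_iff.1 hpos), norm_mul, norm_pow, mul_comm]
    _ ≤ ‖z‖ ^ n * (M - (1 - ‖z‖⁻¹ ^ 2) * ‖P.eval 0‖) := by
        gcongr
        exact le_sub_right_of_add_le hbound
    _ = ‖z‖ ^ n * M - (‖z‖ ^ n - ‖z‖ ^ (n - 2)) * ‖P.eval 0‖ := by rw [hpow]; ring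

theorem stmt_15_general {n : ℕ} (hn : 1 < n) {P : ℂ[X]} (hP : P.natDegree ≤ n) {R : ℝ}
    (hR : 1 ≤ R) :
    maxMod P R ≤ R ^ n * maxMod P 1 - (R ^ n - R ^ (n - 2)) * ‖P.eval 0‖ := by
  refine maxMod_le (zero_le_one.trans hR) ?_
  rintro z rfl
  exact norm_eval_le_of_one_le_norm hn hP (fun u hu ↦ hu ▸ norm_eval_le_maxMod P u) hR

theorem stmt_15 (n : ℕ) (hn : 1 < n) (P : Polynomial ℂ) (hdeg : P.natDegree = n)
    (R : ℝ) (hR : 1 ≤ R) :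
    maxMod P R ≤
      R ^ n * maxMod P 1 - (R ^ n - R ^ (n - 2)) * ‖P.eval 0‖ :=
  stmt_15_general hn hdeg.le hR
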